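/- The sequence (f_k) satisfies the recurrence f_k = ((k−1+δ)·f_{k−1} − (k+δ)·f_k)/(2+ξ) + 1_{k=m} for every integer k ≥ m (where 1_{k=m} equals 1 if k = m and 0 otherwise), and for every integer k ≥ m it has the closed form f_k = (2+ξ)/(2+ξ+m+δ) · (Γ(k+δ)·Γ(m+3+ξ+δ)) / (Γ(k+3+ξ+δ)·Γ(m+δ)), where Γ denotes the real Gamma function. -/

import Mathlib

open Real

/-- The sequence `(f_k)`: `f_k = 0` for `k < m`, `f_m = (2+ξ)/(2+ξ+m+δ)`, and
`f_k = f_{k-1}·(k-1+δ)/(2+ξ+k+δ)` for `k > m`. -/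
noncomputable def f (ξ δ : ℝ) (m : ℕ) : ℕ → ℝ
  | 0 => if m = 0 then (2 + ξ) / (2 + ξ + (m : ℝ) + δ) else 0
  | k + 1 =>
    if k + 1 < m then 0
    else if k + 1 = m then (2 + ξ) / (2 + ξ + (m : ℝ) + δ)
    else f ξ δ m k * ((k : ℝ) + δ) / (2 + ξ + ((k : ℝ) + 1) + δ)

theorem f_lt_aux (ξ δ : ℝ) (m k : ℕ) (h : k < m) : f ξ δ m k = 0 := by
  cases k with
  | zero => rw [f, if_neg (by omega)]
  | succ k => rw [f, if_pos h]

theorem f_self_aux (ξ δ : ℝ) (m : ℕ) : f ξ δ m m = (2 + ξ) / (2 + ξ + (m : ℝ) + δ) := by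
  cases m with
  | zero => rw [f, if_pos rfl]
  | succ k => rw [f, if_neg (by omega), if_pos rfl]

theorem f_succ_aux (ξ δ : ℝ) (m k : ℕ) (h : m ≤ k) :
    f ξ δ m (k + 1) = f ξ δ m k * ((k : ℝ) + δ) / (2 + ξ + ((k : ℝ) + 1) + δ) := by
  rw [f, if_neg (by omega), if_neg (by omega)]

/-- The sequence `(f_k)` satisfies, for every `k ≥ m`, the recurrence
`f_k = ((k−1+δ)·f_{k−1} − (k+δ)·f_k)/(2+ξ) + 1_{k=m}` and has the closed form
`f_k = (2+ξ)/(2+ξ+m+δ) · Γ(k+δ)Γ(m+3+ξ+δ)/(Γ(k+3+ξ+δ)Γ(m+δ))`. -/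
theorem f_recurrence_and_closed_form (ξ δ : ℝ) (hξ : 0 < ξ) (hδ : 0 < δ)
    (m : ℕ) (hm : 1 ≤ m) :
    ∀ k : ℕ, m ≤ k →
      (f ξ δ m k =
          (((k : ℝ) - 1 + δ) * f ξ δ m (k - 1) - ((k : ℝ) + δ) * f ξ δ m k) / (2 + ξ)
            + (if k = m then (1 : ℝ) else 0)) ∧
      f ξ δ m k = (2 + ξ) / (2 + ξ + (m : ℝ) + δ) *
          (Real.Gamma ((k : ℝ) + δ) * Real.Gamma ((m : ℝ) + 3 + ξ + δ)) /
          (Real.Gamma ((k : ℝ) + 3 + ξ + δ) * Real.Gamma ((m : ℝ) + δ)) := by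
  intro k hk
  have hm0 : (0 : ℝ) ≤ m := Nat.cast_nonneg m
  constructor
  · rcases hk.eq_or_lt with rfl | hlt
    · rw [f_lt_aux ξ δ m (m - 1) (by omega), f_self_aux, if_pos rfl]
      have h1 : 2 + ξ ≠ 0 := by positivity
      have h2 : 2 + ξ + (m : ℝ) + δ ≠ 0 := by positivity
      field_simp
      ring
    · obtain ⟨j, rfl⟩ : ∃ j, k = j + 1 := ⟨k - 1, by omega⟩
      have hj : (0 : ℝ) ≤ j := Nat.cast_nonneg j
      rw [if_neg (by omega), Nat.add_sub_cancel, f_succ_aux ξ δ m j (by omega)]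
      have h1 : 2 + ξ ≠ 0 := by positivity
      have h2 : 2 + ξ + ((j : ℝ) + 1) + δ ≠ 0 := by positivity
      push_cast
      field_simp
      ring
  · induction k, hk using Nat.le_induction with
    | base =>
      rw [f_self_aux]
      have h1 : Real.Gamma ((m : ℝ) + δ) ≠ 0 := (Real.Gamma_pos_of_pos (by positivity)).ne'
      have h2 : Real.Gamma ((m : ℝ) + 3 + ξ + δ) ≠ 0 :=
        (Real.Gamma_pos_of_pos (by positivity)).ne'
      have h3 : 2 + ξ + (m : ℝ) + δ ≠ 0 := by positivity
      field_simp
    | succ j hj ih =>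
      have hj0 : (0 : ℝ) ≤ j := Nat.cast_nonneg j
      rw [f_succ_aux ξ δ m j hj, ih]
      have e1 : ((j + 1 : ℕ) : ℝ) + δ = ((j : ℝ) + δ) + 1 := by push_cast; ring
      have e2 : ((j + 1 : ℕ) : ℝ) + 3 + ξ + δ = ((j : ℝ) + 3 + ξ + δ) + 1 := by push_cast; ring
      have e3 : 2 + ξ + ((j : ℝ) + 1) + δ = (j : ℝ) + 3 + ξ + δ := by ring
      have h4 : (j : ℝ) + 3 + ξ + δ ≠ 0 := by positivity
      have h5 : (j : ℝ) + δ ≠ 0 := by positivity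
      rw [e1, e2, e3, Real.Gamma_add_one h4, Real.Gamma_add_one h5]
      have h1 : Real.Gamma ((m : ℝ) + δ) ≠ 0 := (Real.Gamma_pos_of_pos (by positivity)).ne'
      have h2 : Real.Gamma ((j : ℝ) + 3 + ξ + δ) ≠ 0 :=
        (Real.Gamma_pos_of_pos (by positivity)).ne'
      have h3 : 2 + ξ + (m : ℝ) + δ ≠ 0 := by positivity
      generalize Real.Gamma ((m : ℝ) + δ) = A at *
      generalize Real.Gamma ((j : ℝ) + 3 + ξ + δ) = B at *
      generalize (j : ℝ) + 3 + ξ + δ = C at *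
      field_simp
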